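/- Let n ≥ 2, let ξ be a real number with 1 ≤ ξ ≤ n−1, and let C ∈ ℝ^{n×n} be symmetric with nonnegative entries and C_ij = 0 iff i = j. Suppose ε ∈ ℝⁿ has all entries positive, and the matrix P^e defined by P^e_ij = exp(−C_ij/ε_i)/∑_ℓ exp(−C_iℓ/ε_i) satisfies H(P^e_{i:}) = log ξ + 1 for every i. Then for every σ with 0 < σ ≤ min_i ε_i, setting K_σ = (exp(−C_ij/σ))_{ij}, the matrix P^e is the unique minimizer of P ↦ KL(P|K_σ) over H_ξ. -/

import Mathlib

open Finset

/-- Entropy of a nonnegative vector, with the convention `0 * log 0 = 0`. -/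
noncomputable def ent {n : ℕ} (p : Fin n → ℝ) : ℝ :=
  -∑ i, p i * (Real.log (p i) - 1)

/-- Membership in the set `H_ξ`. -/
def Hxi {n : ℕ} (ξ : ℝ) (P : Fin n → Fin n → ℝ) : Prop :=
  (∀ i j, 0 ≤ P i j) ∧ (∀ i, ∑ j, P i j = 1) ∧ (∀ i, Real.log ξ + 1 ≤ ent (P i))

/-- Kullback–Leibler divergence, with the convention `0 * log 0 = 0`. -/
noncomputable def klDiv {n : ℕ} (P K : Fin n → Fin n → ℝ) : ℝ :=
  ∑ i, ∑ j, P i j * (Real.log (P i j / K i j) - 1)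

/-!
A Gibbs distribution `q = gibbs c ε` minimizes the free energy `⟨p, c⟩ / ε - ent p`, and the excess
free energy of `p` is exactly the relative entropy of `p` with respect to `q`. If moreover
`ent q ≤ ent p`, then `⟨q, c⟩ ≤ ⟨p, c⟩`, so lowering the temperature from `ε` to `σ` can only
increase the excess. The divergence from `exp (-C / σ)` is the sum over the rows of the free energy
at temperature `σ`; hence a competitor exceeds the entropic affinity by at least the sum of the
relative entropies of its rows, which is nonnegative and vanishes only at the entropic affinity.
-/

section RelEntropy

variable {ι : Type*} [Fintype ι] {p q : ι → ℝ}

/-- Relative entropy `∑ j, (p j * log (p j / q j) - p j + q j)` of nonnegative vectors, in the form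
where every summand is nonnegative. Meaningful when `q` has no zero entry. -/
noncomputable def relEntropy (p q : ι → ℝ) : ℝ :=
  ∑ j, q j * InformationTheory.klFun (p j / q j)

lemma mul_klFun_div (a : ℝ) {b : ℝ} (hb : b ≠ 0) :
    b * InformationTheory.klFun (a / b) = a * (Real.log a - Real.log b) - a + b := by
  rcases eq_or_ne a 0 with rfl | ha
  · simp [InformationTheory.klFun_zero]
  · rw [InformationTheory.klFun_apply, Real.log_div ha hb]
    field_simp
    ring

lemma relEntropy_self (hq : ∀ j, q j ≠ 0) : relEntropy q q = 0 :=
  sum_eq_zero fun j _ => by rw [div_self (hq j), InformationTheory.klFun_one, mul_zero]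

lemma relEntropy_nonneg (hp : ∀ j, 0 ≤ p j) (hq : ∀ j, 0 ≤ q j) : 0 ≤ relEntropy p q :=
  sum_nonneg fun j _ =>
    mul_nonneg (hq j) (InformationTheory.klFun_nonneg (div_nonneg (hp j) (hq j)))

lemma relEntropy_eq_zero_iff (hp : ∀ j, 0 ≤ p j) (hq : ∀ j, 0 < q j) :
    relEntropy p q = 0 ↔ p = q := by
  have hdiv : ∀ j, 0 ≤ p j / q j := fun j => div_nonneg (hp j) (hq j).le
  rw [relEntropy, sum_eq_zero_iff_of_nonneg fun j _ =>
    mul_nonneg (hq j).le (InformationTheory.klFun_nonneg (hdiv j)), funext_iff]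
  simp only [mem_univ, forall_const, mul_eq_zero, (hq _).ne', false_or,
    InformationTheory.klFun_eq_zero_iff (hdiv _), div_eq_one_iff_eq (hq _).ne']

end RelEntropy

section Gibbs

variable {ι : Type*} [Fintype ι] (c : ι → ℝ) (ε : ℝ)

/-- Gibbs distribution of the cost `c` at temperature `ε`, i.e. a row of the entropic affinity. -/
noncomputable def gibbs (j : ι) : ℝ :=
  Real.exp (-c j / ε) / ∑ l, Real.exp (-c l / ε)

lemma nonempty_of_sum_eq_one {p : ι → ℝ} (hp : ∑ j, p j = 1) : Nonempty ι :=
  univ_nonempty_iff.1 (nonempty_of_sum_ne_zero (hp.trans_ne one_ne_zero))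

lemma sum_exp_pos [Nonempty ι] (f : ι → ℝ) : 0 < ∑ j, Real.exp (f j) :=
  sum_pos (fun j _ => Real.exp_pos (f j)) univ_nonempty

lemma gibbs_pos (j : ι) : 0 < gibbs c ε j :=
  have : Nonempty ι := ⟨j⟩
  div_pos (Real.exp_pos _) (sum_exp_pos _)

lemma sum_gibbs [Nonempty ι] : ∑ j, gibbs c ε j = 1 := by
  simp only [gibbs]
  rw [← sum_div, div_self (sum_exp_pos _).ne']

lemma log_gibbs (j : ι) :
    Real.log (gibbs c ε j) = -c j / ε - Real.log (∑ l, Real.exp (-c l / ε)) := by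
  have : Nonempty ι := ⟨j⟩
  rw [gibbs, Real.log_div (Real.exp_ne_zero _) (sum_exp_pos _).ne', Real.log_exp]

end Gibbs

section FreeEnergy

variable {n : ℕ} (c : Fin n → ℝ) {ε σ : ℝ} {p : Fin n → ℝ}

/-- Free energy of `p` for the cost `c` at temperature `ε`, divided by `ε`. -/
noncomputable def freeEnergy (c : Fin n → ℝ) (ε : ℝ) (p : Fin n → ℝ) : ℝ :=
  p ⬝ᵥ c / ε - ent p

lemma klDiv_exp_eq_sum_freeEnergy (P C : Fin n → Fin n → ℝ) (σ : ℝ) :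
    klDiv P (fun i j => Real.exp (-C i j / σ)) = ∑ i, freeEnergy (C i) σ (P i) := by
  refine sum_congr rfl fun i _ => ?_
  rw [freeEnergy, ent, sub_neg_eq_add, dotProduct, sum_div, ← sum_add_distrib]
  refine sum_congr rfl fun j _ => ?_
  rcases eq_or_ne (P i j) 0 with h | h
  · simp [h]
  · rw [Real.log_div h (Real.exp_ne_zero _), Real.log_exp]
    ring

lemma relEntropy_gibbs (hp : ∑ j, p j = 1) :
    relEntropy p (gibbs c ε) =
      freeEnergy c ε p + Real.log (∑ l, Real.exp (-c l / ε)) + 1 := by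
  have := nonempty_of_sum_eq_one hp
  set L := Real.log (∑ l, Real.exp (-c l / ε)) with hL
  calc relEntropy p (gibbs c ε)
      = ∑ j, (p j * c j / ε + p j * (Real.log (p j) - 1) + p j * L + gibbs c ε j) :=
        sum_congr rfl fun j _ => by
          rw [mul_klFun_div _ (gibbs_pos c ε j).ne', log_gibbs, ← hL]
          ring
    _ = freeEnergy c ε p + L + 1 := by
        rw [sum_add_distrib, sum_add_distrib, sum_add_distrib, ← sum_div, ← sum_mul, hp,
          sum_gibbs, freeEnergy, ent, dotProduct]
        ring

lemma relEntropy_gibbs_eq_freeEnergy_sub (hp : ∑ j, p j = 1) :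
    relEntropy p (gibbs c ε) = freeEnergy c ε p - freeEnergy c ε (gibbs c ε) := by
  have := nonempty_of_sum_eq_one hp
  have hself := relEntropy_gibbs (ε := ε) c (sum_gibbs c ε)
  rw [relEntropy_self fun j => (gibbs_pos c ε j).ne'] at hself
  rw [relEntropy_gibbs c hp]
  linarith

lemma gibbs_dotProduct_le (hε : 0 < ε) (hp0 : ∀ j, 0 ≤ p j) (hp1 : ∑ j, p j = 1)
    (hent : ent (gibbs c ε) ≤ ent p) : gibbs c ε ⬝ᵥ c ≤ p ⬝ᵥ c := by
  have hnonneg := relEntropy_nonneg hp0 fun j => (gibbs_pos c ε j).le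
  rw [relEntropy_gibbs_eq_freeEnergy_sub c hp1, freeEnergy, freeEnergy] at hnonneg
  exact (div_le_div_iff_of_pos_right hε).1 (by linarith)

lemma relEntropy_gibbs_le_freeEnergy_sub (hσ : 0 < σ) (hσε : σ ≤ ε) (hp0 : ∀ j, 0 ≤ p j)
    (hp1 : ∑ j, p j = 1) (hent : ent (gibbs c ε) ≤ ent p) :
    relEntropy p (gibbs c ε) ≤ freeEnergy c σ p - freeEnergy c σ (gibbs c ε) := by
  have hcost := sub_nonneg.2 (gibbs_dotProduct_le c (hσ.trans_le hσε) hp0 hp1 hent)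
  have hcool := div_le_div_of_nonneg_left hcost hσ hσε
  rw [relEntropy_gibbs_eq_freeEnergy_sub c hp1]
  simp only [freeEnergy, sub_div] at hcool ⊢
  linarith

lemma sum_relEntropy_gibbs_le_klDiv_sub (C : Fin n → Fin n → ℝ) {ε : Fin n → ℝ} (hσ : 0 < σ)
    (hσε : ∀ i, σ ≤ ε i) {P : Fin n → Fin n → ℝ} (hP0 : ∀ i j, 0 ≤ P i j)
    (hP1 : ∀ i, ∑ j, P i j = 1) (hent : ∀ i, ent (gibbs (C i) (ε i)) ≤ ent (P i)) :
    ∑ i, relEntropy (P i) (gibbs (C i) (ε i)) ≤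
      klDiv P (fun i j => Real.exp (-C i j / σ)) -
        klDiv (fun i => gibbs (C i) (ε i)) (fun i j => Real.exp (-C i j / σ)) := by
  rw [klDiv_exp_eq_sum_freeEnergy, klDiv_exp_eq_sum_freeEnergy, ← sum_sub_distrib]
  exact sum_le_sum fun i _ =>
    relEntropy_gibbs_le_freeEnergy_sub (C i) hσ (hσε i) (hP0 i) (hP1 i) (hent i)

end FreeEnergy

/-- Perplexity of a probability vector: the exponential of its Shannon entropy, which is
`ent p - 1`. -/
noncomputable def perplexity {n : ℕ} (p : Fin n → ℝ) : ℝ :=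
  Real.exp (ent p - 1)

lemma log_perplexity_add_one {n : ℕ} (p : Fin n → ℝ) : Real.log (perplexity p) + 1 = ent p := by
  rw [perplexity, Real.log_exp, sub_add_cancel]

theorem entropic_affinity_as_KL_projection_general {n : ℕ} (C : Fin n → Fin n → ℝ)
    (ε : Fin n → ℝ) {ξ : ℝ} (hξ : ∀ i, perplexity (gibbs (C i) (ε i)) = ξ)
    {σ : ℝ} (hσ0 : 0 < σ) (hσ : ∀ i, σ ≤ ε i) :
    let Pe : Fin n → Fin n → ℝ := fun i => gibbs (C i) (ε i)
    let Kσ : Fin n → Fin n → ℝ := fun i j => Real.exp (-C i j / σ)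
    Hxi ξ Pe ∧ (∀ P, Hxi ξ P → klDiv Pe Kσ ≤ klDiv P Kσ) ∧
      (∀ P, Hxi ξ P → klDiv P Kσ = klDiv Pe Kσ → P = Pe) := by
  intro Pe Kσ
  have hpos : ∀ i j, 0 < Pe i j := fun i => gibbs_pos (C i) (ε i)
  have hent : ∀ i, Real.log ξ + 1 = ent (Pe i) := fun i => by rw [← hξ i, log_perplexity_add_one]
  have hnonneg : ∀ P, Hxi ξ P → ∀ i ∈ univ, 0 ≤ relEntropy (P i) (Pe i) :=
    fun P hP i _ => relEntropy_nonneg (hP.1 i) fun j => (hpos i j).le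
  have hexcess : ∀ P, Hxi ξ P → ∑ i, relEntropy (P i) (Pe i) ≤ klDiv P Kσ - klDiv Pe Kσ :=
    fun P ⟨hP0, hP1, hPent⟩ =>
      sum_relEntropy_gibbs_le_klDiv_sub C hσ0 hσ hP0 hP1 fun i => (hent i).symm.trans_le (hPent i)
  refine ⟨⟨fun i j => (hpos i j).le, fun i => ?_, fun i => (hent i).le⟩, fun P hP => ?_,
    fun P hP heq => ?_⟩
  · have : Nonempty (Fin n) := ⟨i⟩
    exact sum_gibbs (C i) (ε i)
  · exact sub_nonneg.1 ((sum_nonneg (hnonneg P hP)).trans (hexcess P hP))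
  · have hzero : ∑ i, relEntropy (P i) (Pe i) = 0 :=
      le_antisymm ((hexcess P hP).trans_eq (sub_eq_zero.2 heq)) (sum_nonneg (hnonneg P hP))
    funext i
    exact (relEntropy_eq_zero_iff (hP.1 i) (hpos i)).1
      ((sum_eq_zero_iff_of_nonneg (hnonneg P hP)).1 hzero i (mem_univ i))

theorem entropic_affinity_as_KL_projection
    {n : ℕ} (hn : 2 ≤ n) (ξ : ℝ) (hξ1 : 1 ≤ ξ) (hξ2 : ξ ≤ (n : ℝ) - 1)
    (C : Fin n → Fin n → ℝ) (hCsym : ∀ i j, C i j = C j i)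
    (hCnn : ∀ i j, 0 ≤ C i j) (hCzero : ∀ i j, C i j = 0 ↔ i = j)
    (ε : Fin n → ℝ) (hε : ∀ i, 0 < ε i)
    (Pe : Fin n → Fin n → ℝ)
    (hPe : ∀ i j, Pe i j = Real.exp (-C i j / ε i) / ∑ l, Real.exp (-C i l / ε i))
    (hent : ∀ i, ent (Pe i) = Real.log ξ + 1)
    (σ : ℝ) (hσ0 : 0 < σ) (hσ : ∀ i, σ ≤ ε i) :
    let Kσ : Fin n → Fin n → ℝ := fun i j => Real.exp (-C i j / σ)
    Hxi ξ Pe ∧ (∀ P, Hxi ξ P → klDiv Pe Kσ ≤ klDiv P Kσ) ∧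
      (∀ P, Hxi ξ P → klDiv P Kσ = klDiv Pe Kσ → P = Pe) := by
  intro Kσ
  obtain rfl : Pe = fun i => gibbs (C i) (ε i) := funext₂ hPe
  refine entropic_affinity_as_KL_projection_general C ε (fun i => ?_) hσ0 hσ
  rw [perplexity, hent, add_sub_cancel_right, Real.exp_log (by linarith)]
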